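/- Fix y ∈ 𝒴 and define φ₂(z) = zᵀv(y) − (1/m)·Σ_{c∈C, y'_c ∈ 𝒴_c} max_{y'' : y''_c = y'_c} zᵀv(y''). Then φ₂(z₁) − φ₂(z₂) ≤ √(2|C|)·‖z₁ − z₂‖₂ for all z₁, z₂ ∈ ℝ^m, i.e., the mean-of-max-marginals margin function is √(2|C|)-Lipschitz. -/

import Mathlib

/-!
Write `φ₂ z` as the average over clique assignments of `min (z ⬝ᵥ (v y - v y''))`, the minimum being
over the outputs `y''` consistent with the assignment. Each `v y` is a `0`-`1` vector with `|C|`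
ones, so `v y - v y''` has Euclidean norm at most `√(2|C|)`; by Cauchy–Schwarz every linear
functional in these minima is `√(2|C|)`-Lipschitz, and minima and averages preserve the constant.
-/

open scoped BigOperators

/-- The clique-assignment indicator vectorization. -/
noncomputable def vec {ι S : Type*} [DecidableEq S] (C : Finset (Finset ι)) (y : ι → S) :
    (Σ c : {c // c ∈ C}, ({i // i ∈ c.1} → S)) → ℝ :=
  fun p => if ∀ i : {i // i ∈ p.1.1}, y i.1 = p.2 i then 1 else 0

open Finset
open scoped Matrix

theorem ciSup_le_ciSup_add {α : Sort*} {M : Type*} [Nonempty α] [ConditionallyCompleteLattice M]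
    [Add M] [AddRightMono M] {f g : α → M} {a : M} (hf : BddAbove (Set.range f))
    (h : ∀ i, g i ≤ f i + a) : ⨆ i, g i ≤ (⨆ i, f i) + a :=
  ciSup_le fun i ↦ (h i).trans (by gcongr; exact le_ciSup hf i)

theorem nonempty_subtype_extends {ι S : Type*} {P : ι → Prop} (y : ι → S)
    (a : {i // P i} → S) : Nonempty {y' : ι → S // ∀ i : {i // P i}, y' i.1 = a i} :=
  let ⟨y', hy'⟩ := Subtype.val_injective.surjective_comp_right' y a
  ⟨⟨y', congrFun hy'⟩⟩

/-- The pairs `⟨c, y'_c⟩` of a clique `c ∈ C` and an assignment of values to its members, which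
index the coordinates of `vec`. There are `m` of them. -/
abbrev CliqueAssignment {ι : Type*} (C : Finset (Finset ι)) (S : Type*) :=
  Σ c : {c // c ∈ C}, ({i // i ∈ c.1} → S)

section Vec

variable {ι S : Type*} [DecidableEq S] {C : Finset (Finset ι)}

theorem vec_mk (y : ι → S) (c : {c // c ∈ C}) (a : {i // i ∈ c.1} → S) :
    vec C y ⟨c, a⟩ = if (fun i : {i // i ∈ c.1} ↦ y i.1) = a then 1 else 0 := by
  simp only [vec, funext_iff]

theorem vec_eq_zero_or_one (y : ι → S) (p : CliqueAssignment C S) :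
    vec C y p = 0 ∨ vec C y p = 1 :=
  (ite_eq_or_eq _ _ _).symm

theorem sq_vec_sub_vec_le (y y' : ι → S) (p : CliqueAssignment C S) :
    (vec C y p - vec C y' p) ^ 2 ≤ vec C y p + vec C y' p := by
  rcases vec_eq_zero_or_one y p with h | h <;> rcases vec_eq_zero_or_one y' p with h' | h' <;>
    norm_num [h, h']

variable [Fintype S] [DecidableEq ι]

theorem sum_vec (y : ι → S) : ∑ p, vec C y p = #C := by
  simp [Fintype.sum_sigma, vec_mk]

theorem sum_sq_vec_sub_vec_le (y y' : ι → S) :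
    ∑ p, (vec C y p - vec C y' p) ^ 2 ≤ 2 * #C :=
  calc
    ∑ p, (vec C y p - vec C y' p) ^ 2 ≤ ∑ p, (vec C y p + vec C y' p) :=
      sum_le_sum fun p _ ↦ sq_vec_sub_vec_le y y' p
    _ = 2 * #C := by rw [sum_add_distrib, sum_vec, sum_vec, two_mul]

theorem dotProduct_vec_sub_vec_le (w : CliqueAssignment C S → ℝ) (y y' : ι → S) :
    w ⬝ᵥ (vec C y - vec C y') ≤ √(2 * #C) * √(∑ p, w p ^ 2) :=
  calc
    w ⬝ᵥ (vec C y - vec C y') ≤ √(∑ p, w p ^ 2) * √(∑ p, (vec C y p - vec C y' p) ^ 2) :=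
      Real.sum_mul_le_sqrt_mul_sqrt _ _ _
    _ ≤ √(∑ p, w p ^ 2) * √(2 * #C) := by
      gcongr
      exact sum_sq_vec_sub_vec_le y y'
    _ = √(2 * #C) * √(∑ p, w p ^ 2) := mul_comm _ _

theorem dotProduct_vec_le_sum_abs (z : CliqueAssignment C S → ℝ) (y : ι → S) :
    z ⬝ᵥ vec C y ≤ ∑ p, |z p| :=
  sum_le_sum fun p _ ↦ by
    rcases vec_eq_zero_or_one y p with h | h <;> simp [h, le_abs_self]

end Vec

section Margin

variable {ι S : Type*} [Fintype S] [DecidableEq ι] [DecidableEq S] {C : Finset (Finset ι)}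

/-- The max-marginal of the score `z` at the clique assignment `p = ⟨c, y'_c⟩`: the largest value of
`zᵀv(y'')` over outputs `y''` with `y''_c = y'_c`. -/
noncomputable def maxMarginal (z : CliqueAssignment C S → ℝ) (p : CliqueAssignment C S) : ℝ :=
  ⨆ y' : {y' : ι → S // ∀ i : {i // i ∈ p.1.1}, y' i.1 = p.2 i}, z ⬝ᵥ vec C y'.1

/-- The margin function `φ₂` of the output `y`: its score minus the mean of the max-marginals, as a
function of the score vector `z`. The mean over clique assignments is written with `Finset.expect`,
which is `0` when there are none. -/
noncomputable def meanMaxMargin (y : ι → S) (z : CliqueAssignment C S → ℝ) : ℝ :=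
  z ⬝ᵥ vec C y - 𝔼 p, maxMarginal z p

theorem maxMarginal_le_maxMarginal_add (y : ι → S) (z₁ z₂ : CliqueAssignment C S → ℝ)
    (p : CliqueAssignment C S) :
    maxMarginal z₂ p ≤ maxMarginal z₁ p +
      (√(2 * #C) * √(∑ q, (z₁ q - z₂ q) ^ 2) - (z₁ - z₂) ⬝ᵥ vec C y) := by
  have h_nonempty := nonempty_subtype_extends y p.2
  refine ciSup_le_ciSup_add
    ⟨∑ q, |z₁ q|, Set.forall_mem_range.2 fun y' ↦ dotProduct_vec_le_sum_abs z₁ y'.1⟩ fun y' ↦ ?_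
  have h := dotProduct_vec_sub_vec_le (z₁ - z₂) y y'.1
  simp only [dotProduct_sub, sub_dotProduct, Pi.sub_apply] at h ⊢
  linarith

theorem phi2_lipschitz_general (y : ι → S) (z₁ z₂ : CliqueAssignment C S → ℝ) :
    meanMaxMargin y z₁ - meanMaxMargin y z₂ ≤
      √(2 * #C) * √(∑ p, (z₁ p - z₂ p) ^ 2) := by
  set K := √(2 * #C) * √(∑ p, (z₁ p - z₂ p) ^ 2)
  rcases isEmpty_or_nonempty (CliqueAssignment C S) with _ | _
  · have hK : 0 ≤ K := by positivity
    simpa [meanMaxMargin, dotProduct] using hK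
  · have h_mean : 𝔼 p, maxMarginal z₂ p ≤
        (𝔼 p, maxMarginal z₁ p) + (K - (z₁ - z₂) ⬝ᵥ vec C y) :=
      calc
        𝔼 p, maxMarginal z₂ p ≤ 𝔼 p, (maxMarginal z₁ p + (K - (z₁ - z₂) ⬝ᵥ vec C y)) :=
          expect_le_expect fun p _ ↦ maxMarginal_le_maxMarginal_add y z₁ z₂ p
        _ = (𝔼 p, maxMarginal z₁ p) + (K - (z₁ - z₂) ⬝ᵥ vec C y) := by
          rw [expect_add_distrib, Fintype.expect_const]
    rw [sub_dotProduct] at h_mean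
    simp only [meanMaxMargin]
    linarith

end Margin

/-- φ₂(z) = zᵀv(y) − (1/m) Σ_{c, y'_c} max_{y'' : y''_c = y'_c} zᵀv(y'') is
√(2|C|)-Lipschitz in Euclidean norm, where `m` is the total number of clique
assignments. -/
theorem phi2_lipschitz {ι S : Type*} [Fintype ι] [Fintype S] [DecidableEq ι] [DecidableEq S]
    (C : Finset (Finset ι)) (y : ι → S)
    (z₁ z₂ : (Σ c : {c // c ∈ C}, ({i // i ∈ c.1} → S)) → ℝ) :
    ((∑ p, z₁ p * vec C y p) -
        (1 / (Fintype.card (Σ c : {c // c ∈ C}, ({i // i ∈ c.1} → S)) : ℝ)) *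
          ∑ c : {c // c ∈ C}, ∑ a : {i // i ∈ c.1} → S,
            ⨆ y'' : {y'' : ι → S // ∀ i : {i // i ∈ c.1}, y'' i.1 = a i},
              ∑ p, z₁ p * vec C y''.1 p) -
      ((∑ p, z₂ p * vec C y p) -
        (1 / (Fintype.card (Σ c : {c // c ∈ C}, ({i // i ∈ c.1} → S)) : ℝ)) *
          ∑ c : {c // c ∈ C}, ∑ a : {i // i ∈ c.1} → S,
            ⨆ y'' : {y'' : ι → S // ∀ i : {i // i ∈ c.1}, y'' i.1 = a i},
              ∑ p, z₂ p * vec C y''.1 p) ≤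
    Real.sqrt (2 * C.card) * Real.sqrt (∑ p, (z₁ p - z₂ p) ^ 2) := by
  simpa only [meanMaxMargin, maxMarginal, dotProduct, Fintype.expect_eq_sum_div_card,
    Fintype.sum_sigma, one_div_mul_eq_div] using phi2_lipschitz_general y z₁ z₂
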